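/- arXiv:1604.04071 — 2 statements merged into one kernel-verified Lean document; each statement's English description precedes it below -/
import Mathlib

section
/- Let U be a connected open subset of ℂ with U ≠ ℂ. If U is holomorphically simply connected, then U (with the subspace topology) is simply connected as a topological space; in particular U is homeomorphic to the open unit disc. -/
/-- An open set `U ⊆ ℂ` is *holomorphically simply connected* if every
holomorphic function on `U` has a holomorphic antiderivative on `U`. -/
def HolSC (U : Set ℂ) : Prop :=
  ∀ f : ℂ → ℂ, DifferentiableOn ℂ f U →
    ∃ F : ℂ → ℂ, DifferentiableOn ℂ F U ∧ ∀ z ∈ U, HasDerivAt F (f z) z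

open Set Metric Filter Topology

open scoped ComplexConjugate

theorem not_forall_eq_of_deriv_ne_zero {f : ℂ → ℂ} {U : Set ℂ} {z : ℂ} (hU : U ∈ 𝓝 z)
    (hf : deriv f z ≠ 0) : ¬∃ c, ∀ w ∈ U, f w = c := by
  rintro ⟨c, hc⟩
  have : f =ᶠ[𝓝 z] fun _ ↦ c := eventually_of_mem hU hc
  exact hf (by simp [this.deriv_eq])

/-- **Hurwitz's theorem**: a nonconstant locally uniform limit of injective holomorphic functions
on a connected open set is injective. -/
theorem TendstoLocallyUniformlyOn.injOn_of_not_const {ι : Type*} {φ : Filter ι} [φ.NeBot]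
    {F : ι → ℂ → ℂ} {g : ℂ → ℂ} {U : Set ℂ} (hlim : TendstoLocallyUniformlyOn F g φ U)
    (hUo : IsOpen U) (hUc : IsPreconnected U) (hF : ∀ n, DifferentiableOn ℂ (F n) U)
    (hinj : ∀ n, InjOn (F n) U) (hg : ¬∃ c, ∀ z ∈ U, g z = c) : InjOn g U := by
  intro a ha b hb hab
  by_contra hne
  have hgd : DifferentiableOn ℂ g U := hlim.differentiableOn (.of_forall hF) hUo
  have hga : AnalyticOnNhd ℂ g U := hgd.analyticOnNhd hUo
  have hiso : ∀ᶠ z in 𝓝[≠] a, g z ≠ g a := by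
    refine ((hga a ha).eventually_eq_or_eventually_ne analyticAt_const).resolve_left fun h ↦ hg ?_
    exact ⟨g a, hga.eqOn_of_preconnected_of_eventuallyEq analyticOnNhd_const hUc ha h⟩
  obtain ⟨r, hr, hball⟩ : ∃ r > 0, closedBall a r ⊆ {z | z ∈ U ∧ z ≠ b ∧ (z ≠ a → g z ≠ g a)} :=
    nhds_basis_closedBall.mem_iff.1 <| (hUo.eventually_mem ha).and <|
      (isOpen_ne.eventually_mem hne).and (eventually_nhdsWithin_iff.1 hiso)
  obtain ⟨w, hw, hmin⟩ := (isCompact_sphere a r).exists_isMinOn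
    (NormedSpace.sphere_nonempty.2 hr.le) (f := fun z ↦ ‖g z - g a‖)
    ((hgd.continuousOn.mono fun z hz ↦ (hball (sphere_subset_closedBall hz)).1).sub
      continuousOn_const).norm
  set m := ‖g w - g a‖
  have hm0 : 0 < m := norm_pos_iff.2 <| sub_ne_zero.2 <|
    (hball (sphere_subset_closedBall hw)).2.2 (ne_of_mem_sphere hw hr.ne')
  have hu := (tendstoLocallyUniformlyOn_iff_forall_isCompact hUo).1 hlim (closedBall a r)
    (fun z hz ↦ (hball hz).1) (isCompact_closedBall a r)
  obtain ⟨n, hn, hnb⟩ := ((Metric.tendstoUniformlyOn_iff.1 hu (m / 8) (by positivity)).and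
    (Metric.tendsto_nhds.1 (hlim.tendsto_at hb) (m / 8) (by positivity))).exists
  have hna := hn a (mem_closedBall_self hr.le)
  have hsub := DiffContOnCl.ball_subset_image_closedBall (f := F n) (z₀ := a) (r := r)
    (ε := m / 2) ?_ hr ?_ ?_
  · obtain ⟨z, hz, hzb⟩ := hsub (show F n b ∈ _ by
      rw [mem_ball]
      have := dist_triangle4 (F n b) (g b) (g a) (F n a)
      rw [hab, dist_self] at this
      rw [hab] at hna
      linarith)
    exact (hball hz).2.1 (hinj n (hball hz).1 hb hzb)
  · refine DifferentiableOn.diffContOnCl ((hF n).mono fun z hz ↦ ?_)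
    rw [closure_ball a hr.ne'] at hz
    exact (hball hz).1
  · intro z hz
    have h1 : m ≤ dist (g z) (g a) := by simpa [dist_eq_norm] using hmin hz
    have h2 := hn z (sphere_subset_closedBall hz)
    have h3 := dist_triangle4 (g z) (F n z) (F n a) (g a)
    rw [dist_comm (F n a)] at h3
    rw [← dist_eq_norm]
    linarith
  · have : ∀ᶠ z in 𝓝[≠] a, F n z ≠ F n a := by
      filter_upwards [self_mem_nhdsWithin, nhdsWithin_le_nhds (hUo.mem_nhds ha)] with z hz hzU h
      exact hz (hinj n hzU ha h)
    exact this.frequently.filter_mono nhdsWithin_le_nhds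

theorem Set.MapsTo.mapsTo_closedBall_two {f : ℂ → ℂ} {U : Set ℂ} {z : ℂ} {r : ℝ}
    (hmaps : MapsTo f U (ball 0 1)) (hz : z ∈ U) (hr : ball z r ⊆ U) :
    MapsTo f (ball z r) (closedBall (f z) 2) := by
  intro w hw
  have h1 := hmaps (hr hw)
  have h2 := hmaps hz
  rw [mem_ball] at h1 h2
  rw [mem_closedBall]
  linarith [dist_triangle_right (f w) (f z) 0]

/-- **Montel's theorem** along an ultrafilter: a family of holomorphic functions with values in the
unit disc converges locally uniformly along every ultrafilter. -/
theorem exists_tendstoLocallyUniformlyOn_of_mapsTo_unit_ball {ι : Type*} (φ : Ultrafilter ι)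
    {F : ι → ℂ → ℂ} {U : Set ℂ} (hUo : IsOpen U) (hF : ∀ n, DifferentiableOn ℂ (F n) U)
    (hmaps : ∀ n, MapsTo (F n) U (ball 0 1)) :
    ∃ g : ℂ → ℂ, MapsTo g U (closedBall 0 1) ∧ TendstoLocallyUniformlyOn F g φ U := by
  have hpt : ∀ z, ∃ c, z ∈ U → c ∈ closedBall (0 : ℂ) 1 ∧ Tendsto (F · z) φ (𝓝 c) := by
    intro z
    by_cases hz : z ∈ U
    · obtain ⟨c, hc, hlim⟩ := (isCompact_closedBall (0 : ℂ) 1).ultrafilter_le_nhds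
        (φ.map (F · z)) (le_principal_iff.2 (Eventually.of_forall (f := (φ : Filter ι))
          fun n ↦ ball_subset_closedBall (hmaps n hz)))
      exact ⟨c, fun _ ↦ ⟨hc, hlim⟩⟩
    · exact ⟨0, fun h ↦ (hz h).elim⟩
  choose g hg using hpt
  refine ⟨g, fun z hz ↦ (hg z hz).1, Metric.tendstoLocallyUniformlyOn_iff.2 fun ε hε z hz ↦ ?_⟩
  obtain ⟨r, hr, hball⟩ := Metric.isOpen_iff.1 hUo z hz
  have hδ : 0 < min r (r * ε / 8) := by positivity
  refine ⟨ball z (min r (r * ε / 8)), mem_nhdsWithin_of_mem_nhds (ball_mem_nhds z hδ), ?_⟩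
  have hosc : ∀ n, ∀ w ∈ ball z (min r (r * ε / 8)), dist (F n w) (F n z) ≤ ε / 4 := by
    intro n w hw
    rw [mem_ball, lt_min_iff] at hw
    refine (Complex.dist_le_div_mul_dist_of_mapsTo_ball ((hF n).mono hball)
      ((hmaps n).mapsTo_closedBall_two hz hball) hw.1).trans ?_
    calc 2 / r * dist w z ≤ 2 / r * (r * ε / 8) := by gcongr; exact hw.2.le
      _ = ε / 4 := by field_simp; norm_num
  filter_upwards [Metric.tendsto_nhds.1 (hg z hz).2 (ε / 4) (by positivity)] with n hn w hw
  have hwU : w ∈ U := hball (ball_subset_ball (min_le_left _ _) hw)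
  have hlim : dist (g w) (g z) ≤ ε / 4 :=
    le_of_tendsto ((hg w hwU).2.dist (hg z hz).2) (.of_forall fun n ↦ hosc n w hw)
  have h1 := hosc n w hw
  have h2 := dist_triangle4 (g w) (g z) (F n z) (F n w)
  rw [dist_comm (g z), dist_comm (F n z) (F n w)] at h2
  linarith

/-- On a holomorphically simply connected domain, every nowhere vanishing holomorphic function has
a holomorphic square root. -/
theorem HolSC.exists_sq_eq {U : Set ℂ} (hU : HolSC U) (hUo : IsOpen U) (hUc : IsPreconnected U)
    {g : ℂ → ℂ} (hg : DifferentiableOn ℂ g U) (hg0 : ∀ z ∈ U, g z ≠ 0) :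
    ∃ s : ℂ → ℂ, DifferentiableOn ℂ s U ∧ ∀ z ∈ U, s z ^ 2 = g z := by
  obtain ⟨F, hFd, hF⟩ := hU (fun z ↦ deriv g z / g z) ((hg.deriv hUo).div hg hg0)
  have hder : ∀ z ∈ U, HasDerivAt (fun z ↦ g z * Complex.exp (-F z)) 0 z := by
    intro z hz
    convert! (hg.differentiableAt (hUo.mem_nhds hz)).hasDerivAt.mul (hF z hz).neg.cexp using 1
    field_simp [hg0 z hz]
    ring
  obtain ⟨c, hc⟩ := hUo.exists_is_const_of_deriv_eq_zero hUc
    (fun z hz ↦ (hder z hz).differentiableAt.differentiableWithinAt) fun z hz ↦ (hder z hz).deriv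
  refine ⟨fun z ↦ Complex.exp ((F z + Complex.log c) / 2),
    ((hFd.add_const _).div_const _).cexp, fun z hz ↦ ?_⟩
  have hcz := hc z hz
  have hc0 : c ≠ 0 := hcz ▸ mul_ne_zero (hg0 z hz) (Complex.exp_ne_zero _)
  rw [← Complex.exp_nat_mul, Nat.cast_ofNat, mul_div_cancel₀ _ two_ne_zero, Complex.exp_add,
    Complex.exp_log hc0, ← hcz, mul_left_comm, ← Complex.exp_add]
  simp

namespace Complex

/-- The automorphism of the unit disc that sends `a` to `0`. -/
noncomputable def discAutomorphism (a z : ℂ) : ℂ := (z - a) / (1 - conj a * z)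

theorem one_sub_conj_mul_ne_zero {a z : ℂ} (ha : ‖a‖ < 1) (hz : ‖z‖ < 1) :
    1 - conj a * z ≠ 0 := by
  intro h
  have h1 : ‖conj a * z‖ = 1 := by rw [← sub_eq_zero.1 h, norm_one]
  rw [norm_mul, norm_conj] at h1
  nlinarith [norm_nonneg a, norm_nonneg z]

theorem norm_discAutomorphism_lt_one {a z : ℂ} (ha : ‖a‖ < 1) (hz : ‖z‖ < 1) :
    ‖discAutomorphism a z‖ < 1 := by
  have hd := one_sub_conj_mul_ne_zero ha hz
  rw [discAutomorphism, norm_div, div_lt_one (norm_pos_iff.2 hd)]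
  refine lt_of_pow_lt_pow_left₀ 2 (norm_nonneg _) ?_
  have key : ‖1 - conj a * z‖ ^ 2 - ‖z - a‖ ^ 2 = (1 - ‖a‖ ^ 2) * (1 - ‖z‖ ^ 2) := by
    simp only [← normSq_eq_norm_sq, normSq_apply]
    simp
    ring
  have : 0 < (1 - ‖a‖ ^ 2) * (1 - ‖z‖ ^ 2) :=
    mul_pos (by nlinarith [norm_nonneg a]) (by nlinarith [norm_nonneg z])
  linarith

theorem norm_one_sub_conj_mul_self {a : ℂ} (ha : ‖a‖ < 1) :
    ‖1 - conj a * a‖ = 1 - ‖a‖ ^ 2 := by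
  rw [conj_mul', ← ofReal_pow, ← ofReal_one, ← ofReal_sub, norm_real, Real.norm_of_nonneg]
  nlinarith [norm_nonneg a]

theorem injOn_discAutomorphism {a : ℂ} (ha : ‖a‖ < 1) :
    InjOn (discAutomorphism a) (ball 0 1) := by
  intro z hz w hw h
  rw [mem_ball_zero_iff] at hz hw
  rw [discAutomorphism, discAutomorphism, div_eq_div_iff (one_sub_conj_mul_ne_zero ha hz)
    (one_sub_conj_mul_ne_zero ha hw)] at h
  have h0 : (z - w) * (1 - conj a * a) = 0 := by linear_combination h
  exact sub_eq_zero.1 ((mul_eq_zero.1 h0).resolve_right (one_sub_conj_mul_ne_zero ha ha))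

theorem hasDerivAt_discAutomorphism {a z : ℂ} (ha : ‖a‖ < 1) (hz : ‖z‖ < 1) :
    HasDerivAt (discAutomorphism a) ((1 - conj a * a) / (1 - conj a * z) ^ 2) z := by
  convert! ((hasDerivAt_id z).sub_const a).div
    (((hasDerivAt_id z).const_mul (conj a)).const_sub 1) (one_sub_conj_mul_ne_zero ha hz) using 1
  simp only [id]
  ring

/-- The injective holomorphic maps from `U` to the unit disc that vanish at `z₀`. -/
def univalentDiscMaps (U : Set ℂ) (z₀ : ℂ) : Set (ℂ → ℂ) :=
  {f | DifferentiableOn ℂ f U ∧ MapsTo f U (ball 0 1) ∧ InjOn f U ∧ f z₀ = 0}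

variable {U : Set ℂ} {z₀ : ℂ} {f : ℂ → ℂ}

theorem exists_mem_univalentDiscMaps_norm_deriv_eq (hUo : IsOpen U) (hz₀ : z₀ ∈ U)
    (hf : DifferentiableOn ℂ f U) (hmaps : MapsTo f U (ball 0 1)) (hinj : InjOn f U) :
    ∃ h ∈ univalentDiscMaps U z₀, ‖deriv h z₀‖ = ‖deriv f z₀‖ / (1 - ‖f z₀‖ ^ 2) := by
  have hlt : ∀ z ∈ U, ‖f z‖ < 1 := fun z hz ↦ mem_ball_zero_iff.1 (hmaps hz)
  have hder : ∀ z ∈ U, HasDerivAt (discAutomorphism (f z₀) ∘ f) _ z := fun z hz ↦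
    (hasDerivAt_discAutomorphism (hlt z₀ hz₀) (hlt z hz)).comp z
      (hf.differentiableAt (hUo.mem_nhds hz)).hasDerivAt
  refine ⟨discAutomorphism (f z₀) ∘ f,
    ⟨fun z hz ↦ (hder z hz).differentiableAt.differentiableWithinAt, fun z hz ↦ ?_,
      (injOn_discAutomorphism (hlt z₀ hz₀)).comp hinj hmaps, by simp [discAutomorphism]⟩, ?_⟩
  · exact mem_ball_zero_iff.2 (norm_discAutomorphism_lt_one (hlt z₀ hz₀) (hlt z hz))
  · have hn := norm_one_sub_conj_mul_self (hlt z₀ hz₀)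
    have hpos : 1 - ‖f z₀‖ ^ 2 ≠ 0 := by
      rw [← hn]
      exact norm_ne_zero_iff.2 (one_sub_conj_mul_ne_zero (hlt z₀ hz₀) (hlt z₀ hz₀))
    rw [(hder z₀ hz₀).deriv, norm_mul, norm_div, norm_pow, hn]
    field_simp

theorem exists_mem_univalentDiscMaps_deriv_ne_zero (hUo : IsOpen U) (hUc : IsPreconnected U)
    (hUne : U ≠ univ) (hU : HolSC U) (hz₀ : z₀ ∈ U) :
    ∃ f ∈ univalentDiscMaps U z₀, deriv f z₀ ≠ 0 := by
  obtain ⟨a, ha⟩ := (ne_univ_iff_exists_notMem U).1 hUne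
  obtain ⟨s, hs, hsq⟩ := hU.exists_sq_eq hUo hUc (g := fun z ↦ z - a)
    (differentiableOn_id.sub_const a) fun z hz h ↦ ha (sub_eq_zero.1 h ▸ hz)
  have hs0 : ∀ z ∈ U, s z ≠ 0 := by
    intro z hz h
    have := hsq z hz
    rw [h, zero_pow two_ne_zero, eq_comm, sub_eq_zero] at this
    exact ha (this ▸ hz)
  have hsinj : ∀ z ∈ U, ∀ w ∈ U, s z ^ 2 = s w ^ 2 → z = w := by
    intro z hz w hw h
    rw [hsq z hz, hsq w hw] at h
    exact sub_left_injective h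
  have hds : deriv s z₀ ≠ 0 := by
    intro h
    have h1 := (hs.differentiableAt (hUo.mem_nhds hz₀)).hasDerivAt.pow 2
    have h2 : HasDerivAt (s ^ 2) 1 z₀ := ((hasDerivAt_id z₀).sub_const a).congr_of_eventuallyEq
      (eventually_of_mem (hUo.mem_nhds hz₀) hsq)
    simpa [h] using h1.unique h2
  have hsopen : IsOpen (s '' U) :=
    ((hs.analyticOnNhd hUo).is_constant_or_isOpen hUc).resolve_left
      (not_forall_eq_of_deriv_ne_zero (hUo.mem_nhds hz₀) hds) U subset_rfl hUo
  obtain ⟨ε, hε, hball⟩ := Metric.isOpen_iff.1 hsopen (s z₀) (mem_image_of_mem s hz₀)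
  have hfar : ∀ z ∈ U, ε ≤ ‖s z + s z₀‖ := by
    intro z hz
    by_contra! h
    obtain ⟨w, hw, hwz⟩ := hball (show -s z ∈ ball (s z₀) ε by
      rwa [mem_ball, dist_eq_norm, ← norm_neg, neg_sub, sub_neg_eq_add, add_comm])
    obtain rfl : w = z := hsinj w hw z hz (by rw [hwz, neg_sq])
    exact hs0 w hw (self_eq_neg.1 hwz)
  have hne : ∀ z ∈ U, s z + s z₀ ≠ 0 := fun z hz ↦ norm_pos_iff.1 (hε.trans_le (hfar z hz))
  have hder : ∀ z ∈ U, HasDerivAt (fun z ↦ (ε / 2 : ℂ) / (s z + s z₀)) _ z := fun z hz ↦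
    (hasDerivAt_const z (ε / 2 : ℂ)).div
      ((hs.differentiableAt (hUo.mem_nhds hz)).hasDerivAt.add_const (s z₀)) (hne z hz)
  have hmaps : MapsTo (fun z ↦ (ε / 2 : ℂ) / (s z + s z₀)) U (ball 0 1) := by
    intro z hz
    rw [mem_ball_zero_iff, norm_div, div_lt_one (norm_pos_iff.2 (hne z hz))]
    refine lt_of_lt_of_le ?_ (hfar z hz)
    rw [norm_div, norm_real, Real.norm_of_nonneg hε.le, Complex.norm_ofNat]
    linarith
  have hinj : InjOn (fun z ↦ (ε / 2 : ℂ) / (s z + s z₀)) U := by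
    intro z hz w hw hzw
    have hε' : (ε : ℂ) ≠ 0 := ofReal_ne_zero.2 hε.ne'
    have := mul_left_cancel₀ (div_ne_zero hε' two_ne_zero)
      ((div_eq_div_iff (hne z hz) (hne w hw)).1 hzw)
    refine hsinj z hz w hw ?_
    rw [add_right_cancel this]
  obtain ⟨h, hh, hdh⟩ := exists_mem_univalentDiscMaps_norm_deriv_eq hUo hz₀
    (fun z hz ↦ (hder z hz).differentiableAt.differentiableWithinAt) hmaps hinj
  refine ⟨h, hh, norm_ne_zero_iff.1 ?_⟩
  have hlt : ‖(ε / 2 : ℂ) / (s z₀ + s z₀)‖ < 1 := mem_ball_zero_iff.1 (hmaps hz₀)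
  rw [hdh, (hder z₀ hz₀).deriv]
  refine div_ne_zero ?_ ?_
  · simp [hε.ne', hds, hs0 z₀ hz₀]
  · nlinarith [norm_nonneg ((ε / 2 : ℂ) / (s z₀ + s z₀))]

/-- Among the univalent maps to the disc there is one with maximal derivative at `z₀`. -/
theorem exists_mem_univalentDiscMaps_isMaxOn (hUo : IsOpen U) (hUc : IsPreconnected U)
    (hz₀ : z₀ ∈ U) (hex : ∃ f ∈ univalentDiscMaps U z₀, deriv f z₀ ≠ 0) :
    ∃ f ∈ univalentDiscMaps U z₀, deriv f z₀ ≠ 0 ∧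
      IsMaxOn (fun h ↦ ‖deriv h z₀‖) (univalentDiscMaps U z₀) f := by
  obtain ⟨f₀, hf₀, hdf₀⟩ := hex
  obtain ⟨r, hr, hball⟩ := Metric.isOpen_iff.1 hUo z₀ hz₀
  set S : Set ℝ := (fun h ↦ ‖deriv h z₀‖) '' univalentDiscMaps U z₀
  have hbdd : BddAbove S := ⟨2 / r, forall_mem_image.2 fun h hh ↦
    norm_deriv_le_div_of_mapsTo_ball (hh.1.mono hball) (hh.2.1.mapsTo_closedBall_two hz₀ hball) hr⟩
  obtain ⟨u, -, hu, huS⟩ := exists_seq_tendsto_sSup ⟨_, mem_image_of_mem _ hf₀⟩ hbdd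
  choose F hF hFu using huS
  obtain ⟨g, hgmaps, hlim⟩ := exists_tendstoLocallyUniformlyOn_of_mapsTo_unit_ball
    (hyperfilter ℕ) hUo (fun n ↦ (hF n).1) fun n ↦ (hF n).2.1
  have hgd : DifferentiableOn ℂ g U := hlim.differentiableOn (.of_forall fun n ↦ (hF n).1) hUo
  have hgS : ‖deriv g z₀‖ = sSup S := by
    refine tendsto_nhds_unique
      ((hlim.deriv (.of_forall fun n ↦ (hF n).1) hUo).tendsto_at hz₀).norm ?_
    simpa [hFu] using! hu.mono_left Nat.hyperfilter_le_atTop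
  have hmax : IsMaxOn (fun h ↦ ‖deriv h z₀‖) (univalentDiscMaps U z₀) g := fun h hh ↦ by
    simpa [hgS] using le_csSup hbdd (mem_image_of_mem _ hh)
  have hdg : deriv g z₀ ≠ 0 := norm_pos_iff.1 ((norm_pos_iff.2 hdf₀).trans_le (hmax hf₀))
  have hconst : ¬∃ c, ∀ z ∈ U, g z = c :=
    not_forall_eq_of_deriv_ne_zero (hUo.mem_nhds hz₀) hdg
  have hopen : IsOpen (g '' U) :=
    ((hgd.analyticOnNhd hUo).is_constant_or_isOpen hUc).resolve_left hconst U subset_rfl hUo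
  refine ⟨g, ⟨hgd, ?_, hlim.injOn_of_not_const hUo hUc (fun n ↦ (hF n).1)
    (fun n ↦ (hF n).2.2.1) hconst, ?_⟩, hdg, hmax⟩
  · rw [← interior_closedBall (0 : ℂ) one_ne_zero]
    exact mapsTo_iff_image_subset.2 (interior_maximal hgmaps.image_subset hopen)
  · refine tendsto_nhds_unique (hlim.tendsto_at hz₀) ?_
    simp [(hF _).2.2.2]

/-- An extremal univalent map to the disc is surjective (Koebe's square root trick). -/
theorem surjOn_ball_of_isMaxOn (hUo : IsOpen U) (hUc : IsPreconnected U) (hU : HolSC U)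
    (hz₀ : z₀ ∈ U) (hf : f ∈ univalentDiscMaps U z₀) (hdf : deriv f z₀ ≠ 0)
    (hmax : IsMaxOn (fun h ↦ ‖deriv h z₀‖) (univalentDiscMaps U z₀) f) :
    SurjOn f U (ball 0 1) := by
  obtain ⟨hfd, hmaps, hinj, hf0⟩ := hf
  intro w hw
  by_contra hwU
  rw [mem_ball_zero_iff] at hw
  have hlt : ∀ z ∈ U, ‖f z‖ < 1 := fun z hz ↦ mem_ball_zero_iff.1 (hmaps hz)
  have hder : ∀ z ∈ U, HasDerivAt (discAutomorphism w ∘ f) _ z := fun z hz ↦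
    (hasDerivAt_discAutomorphism hw (hlt z hz)).comp z
      (hfd.differentiableAt (hUo.mem_nhds hz)).hasDerivAt
  obtain ⟨s, hs, hsq⟩ := hU.exists_sq_eq hUo hUc (g := discAutomorphism w ∘ f)
    (fun z hz ↦ (hder z hz).differentiableAt.differentiableWithinAt) fun z hz h ↦ by
      rw [Function.comp_apply, discAutomorphism, div_eq_zero_iff] at h
      exact hwU ⟨z, hz, sub_eq_zero.1 (h.resolve_right (one_sub_conj_mul_ne_zero hw (hlt z hz)))⟩
  obtain ⟨h, hh, hdh⟩ := exists_mem_univalentDiscMaps_norm_deriv_eq hUo hz₀ hs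
    (fun z hz ↦ by
      rw [mem_ball_zero_iff, ← pow_lt_one_iff_of_nonneg (norm_nonneg _) two_ne_zero, ← norm_pow,
        hsq z hz]
      exact norm_discAutomorphism_lt_one hw (hlt z hz))
    (fun z hz z' hz' hzz' ↦ hinj hz hz' <| injOn_discAutomorphism hw (hmaps hz) (hmaps hz') <| by
      rw [← Function.comp_apply (f := discAutomorphism w), ← hsq z hz, hzz', hsq z' hz',
        Function.comp_apply])
  have hsw : ‖s z₀‖ ^ 2 = ‖w‖ := by
    rw [← norm_pow, hsq z₀ hz₀]
    simp [discAutomorphism, hf0]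
  have hds : 2 * ‖s z₀‖ * ‖deriv s z₀‖ = (1 - ‖w‖ ^ 2) * ‖deriv f z₀‖ := by
    have h1 := (hs.differentiableAt (hUo.mem_nhds hz₀)).hasDerivAt.pow 2
    have h2 := (hder z₀ hz₀).congr_of_eventuallyEq
      (f₁ := s ^ 2) (eventually_of_mem (hUo.mem_nhds hz₀) hsq)
    simpa [hf0, norm_one_sub_conj_mul_self hw] using congrArg norm (h1.unique h2)
  have hle : ‖deriv s z₀‖ / (1 - ‖s z₀‖ ^ 2) ≤ ‖deriv f z₀‖ := hdh ▸ hmax hh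
  have hs1 : 0 < 1 - ‖s z₀‖ ^ 2 := by linarith
  rw [div_le_iff₀ hs1] at hle
  have hd := norm_pos_iff.2 hdf
  set t := ‖s z₀‖
  have ht0 : 0 ≤ t := norm_nonneg _
  rw [← hsw] at hds
  have h1 : (1 - (t ^ 2) ^ 2) * ‖deriv f z₀‖ ≤ 2 * t * (‖deriv f z₀‖ * (1 - t ^ 2)) := by
    rw [← hds]
    gcongr
  have h2 : (1 - t) ^ 2 * ((1 - t ^ 2) * ‖deriv f z₀‖) ≤ 0 := by linarith
  have h3 : 0 < (1 - t) ^ 2 := by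
    have : t ≠ 1 := by rintro h; simp [h] at hs1
    have := sub_ne_zero.2 this.symm
    positivity
  exact h2.not_gt (mul_pos h3 (mul_pos hs1 hd))

end Complex

/-- An injective nonconstant holomorphic map on a domain is a homeomorphism onto its image. -/
theorem Set.InjOn.nonempty_homeomorph_image {U V : Set ℂ} {f : ℂ → ℂ} (hUo : IsOpen U)
    (hUc : IsPreconnected U) (hf : DifferentiableOn ℂ f U) (hinj : InjOn f U)
    (hV : f '' U = V) (hconst : ¬∃ c, ∀ z ∈ U, f z = c) : Nonempty (U ≃ₜ V) := by
  subst hV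
  have hcont : Continuous ((mapsTo_image f U).restrict f U _) :=
    hf.continuousOn.mapsToRestrict (mapsTo_image f U)
  refine ⟨(Equiv.Set.imageOfInjOn f U hinj).toHomeomorphOfContinuousOpen hcont ?_⟩
  intro s hs
  obtain ⟨t, ht, rfl⟩ := isOpen_induced_iff.1 hs
  refine isOpen_induced_iff.2 ⟨f '' (U ∩ t),
    ((hf.analyticOnNhd hUo).is_constant_or_isOpen hUc).resolve_left hconst _ inter_subset_left
      (hUo.inter ht), ?_⟩
  ext ⟨y, x, hx, rfl⟩
  simp only [mem_preimage, mem_image, Subtype.exists, Subtype.ext_iff]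
  exact ⟨fun ⟨w, hw, h⟩ ↦ ⟨w, hw.1, hw.2, h⟩, fun ⟨w, hwU, hwt, h⟩ ↦ ⟨w, ⟨hwU, hwt⟩, h⟩⟩

/-- A connected open proper subset of `ℂ` that is holomorphically simply connected
is simply connected as a topological space; in particular it is homeomorphic to
the open unit disc. -/
theorem holSC_implies_simplyConnected (U : Set ℂ) (hUopen : IsOpen U)
    (hUconn : IsConnected U) (hUne : U ≠ Set.univ) (hU : HolSC U) :
    SimplyConnectedSpace U ∧ Nonempty (U ≃ₜ (Metric.ball (0 : ℂ) 1)) := by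
  obtain ⟨z₀, hz₀⟩ := hUconn.nonempty
  have hUc := hUconn.isPreconnected
  obtain ⟨f, hf, hdf, hmax⟩ := Complex.exists_mem_univalentDiscMaps_isMaxOn hUopen hUc hz₀
    (Complex.exists_mem_univalentDiscMaps_deriv_ne_zero hUopen hUc hUne hU hz₀)
  have hsurj := Complex.surjOn_ball_of_isMaxOn hUopen hUc hU hz₀ hf hdf hmax
  obtain ⟨hfd, hmaps, hinj, -⟩ := hf
  obtain ⟨e⟩ := hinj.nonempty_homeomorph_image hUopen hUc hfd
    (hsurj.image_eq_of_mapsTo hmaps)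
    (not_forall_eq_of_deriv_ne_zero (hUopen.mem_nhds hz₀) hdf)
  have : ContractibleSpace (ball (0 : ℂ) 1) := contractibleSpace_ball one_pos
  exact ⟨e.toHomotopyEquiv.simplyConnectedSpace, ⟨e⟩⟩
end

section
/- Let U be a bounded connected open subset of ℂ that is holomorphically simply connected, and let q be a boundary point of U. Then there exists a holomorphic function ψ on U such that Re ψ(z) < 0 for all z ∈ U and Re ψ(z) → 0 as z → q within U (i.e., for every sequence z_j in U converging to q, Re ψ(z_j) → 0). In particular, Re ψ is a weak barrier for U at q. -/
open Filter Topology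

/-- On a holomorphically simply connected domain, `z - q` has a holomorphic logarithm for every
point `q` outside the domain. -/
theorem HolSC.exists_log_sub {U : Set ℂ} (hU : HolSC U) (hUopen : IsOpen U)
    (hUconn : IsConnected U) {q : ℂ} (hq : q ∉ U) :
    ∃ L : ℂ → ℂ, DifferentiableOn ℂ L U ∧ ∀ z ∈ U, Complex.exp (L z) = z - q := by
  have hne : ∀ z ∈ U, z - q ≠ 0 := fun z hz h => hq (sub_eq_zero.mp h ▸ hz)
  obtain ⟨F, hFd, hF⟩ := hU (fun z => (z - q)⁻¹)
    ((differentiableOn_id.sub_const q).inv hne)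
  have hderiv : ∀ z ∈ U, HasDerivAt (fun w => Complex.exp (-F w) * (w - q)) 0 z := by
    intro z hz
    refine ((hF z hz).fun_neg.cexp.fun_mul ((hasDerivAt_id' z).sub_const q)).congr_deriv ?_
    have := hne z hz
    field_simp
    ring
  obtain ⟨c, hc⟩ := hUopen.exists_is_const_of_deriv_eq_zero hUconn.isPreconnected
    (fun z hz => (hderiv z hz).differentiableAt.differentiableWithinAt)
    (fun z hz => (hderiv z hz).deriv)
  obtain ⟨z₀, hz₀⟩ := hUconn.nonempty
  have hc0 : c ≠ 0 := hc z₀ hz₀ ▸ mul_ne_zero (Complex.exp_ne_zero _) (hne z₀ hz₀)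
  refine ⟨fun z => F z + Complex.log c, hFd.add_const _, fun z hz => ?_⟩
  rw [Complex.exp_add, Complex.exp_log hc0, ← hc z hz, ← mul_assoc, ← Complex.exp_add,
    add_neg_cancel, Complex.exp_zero, one_mul]

/-- At each boundary point `q` of a bounded holomorphically simply connected
domain there is a holomorphic function `ψ` on `U` whose real part is negative on
`U` and tends to `0` at `q`; in particular `Re ψ` is a (harmonic) weak barrier
for `U` at `q`. -/
theorem holSC_weak_barrier (U : Set ℂ) (hUopen : IsOpen U) (hUconn : IsConnected U)
    (hUbdd : Bornology.IsBounded U) (hU : HolSC U) (q : ℂ) (hq : q ∈ frontier U) :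
    ∃ ψ : ℂ → ℂ, DifferentiableOn ℂ ψ U ∧
      (∀ z ∈ U, (ψ z).re < 0) ∧
      Tendsto (fun z => (ψ z).re) (nhdsWithin q U) (nhds 0) := by
  have hqU : q ∉ U := fun h => hq.2 (hUopen.interior_eq.symm ▸ h)
  obtain ⟨L, hLd, hL⟩ := hU.exists_log_sub hUopen hUconn hqU
  obtain ⟨R, hR⟩ := hUbdd.subset_ball q
  have hlog : ∀ z ∈ U, (L z).re = Real.log ‖z - q‖ := fun z hz => by
    rw [← hL z hz, Complex.norm_exp, Real.log_exp]
  have hneg : ∀ z ∈ U, (L z - (Real.log R : ℂ)).re < 0 := fun z hz => by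
    have hpos : 0 < ‖z - q‖ := norm_pos_iff.mpr (hL z hz ▸ Complex.exp_ne_zero _)
    rw [Complex.sub_re, Complex.ofReal_re, hlog z hz, sub_neg]
    exact Real.log_lt_log hpos (mem_ball_iff_norm.mp (hR hz))
  refine ⟨fun z => (L z - (Real.log R : ℂ))⁻¹, (hLd.sub_const _).inv fun z hz h => ?_,
    fun z hz => ?_, ?_⟩
  · simpa [h] using hneg z hz
  · have h0 : L z - (Real.log R : ℂ) ≠ 0 := fun h => by simpa [h] using hneg z hz
    rw [Complex.inv_re]
    exact div_neg_of_neg_of_pos (hneg z hz) (Complex.normSq_pos.mpr h0)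
  · have hnorm : Tendsto (fun z => ‖z - q‖) (𝓝[U] q) (𝓝[≠] 0) := by
      refine tendsto_nhdsWithin_iff.mpr ⟨?_, ?_⟩
      · exact tendsto_nhdsWithin_of_tendsto_nhds (tendsto_norm_sub_self q)
      · filter_upwards [self_mem_nhdsWithin] with z hz
        exact norm_ne_zero_iff.mpr (hL z hz ▸ Complex.exp_ne_zero _)
    have hbot : Tendsto (fun z => (L z - (Real.log R : ℂ)).re) (𝓝[U] q) atBot := by
      refine (tendsto_atBot_add_const_right _ (-Real.log R)
        (Real.tendsto_log_nhdsNE_zero.comp hnorm)).congr' ?_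
      filter_upwards [self_mem_nhdsWithin] with z hz
      simp [hlog z hz, sub_eq_add_neg]
    have hinfty : Tendsto (fun z => ‖L z - (Real.log R : ℂ)‖) (𝓝[U] q) atTop :=
      tendsto_atTop_mono (fun z => Complex.abs_re_le_norm _) (tendsto_abs_atBot_atTop.comp hbot)
    have hinv := tendsto_inv₀_cobounded.comp (tendsto_norm_atTop_iff_cobounded.mp hinfty)
    exact (Complex.continuous_re.tendsto 0).comp hinv
end
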